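/- Let a > 0 and let T_a ⊂ ℝ² be the open equilateral triangle with vertices (0,0), (a,0), (a/2, (√3/2)a). For every smooth function Ψ : ℝ² → ℝ with compact support contained in T_a, one has ∫_{ℝ²} ‖∇Ψ(x)‖² dx ≥ (16π²/(3a²)) · ∫_{ℝ²} Ψ(x)² dx. In particular, when the triangle has area π this Poincaré (Rayleigh-quotient) constant equals 4π/√3, so 4π/√3 is a lower bound for all Dirichlet eigenvalues of the area-π equilateral triangle. -/

import Mathlib

open Real MeasureTheory

/-- The open equilateral triangle with vertices `(0,0)`, `(a,0)`, `(a/2, (√3/2)a)`. -/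
noncomputable def eqTriangle (a : ℝ) : Set (ℝ × ℝ) :=
  interior (convexHull ℝ ({((0 : ℝ), (0 : ℝ)), (a, 0), (a / 2, Real.sqrt 3 / 2 * a)} : Set (ℝ × ℝ)))

/-!
Barta's method. If `φ > 0` and `-Δφ = λφ`, then the field `A = ∇φ / φ` solves the Riccati equation
`div A + |A|² = -λ`, and integrating `|∇Ψ - ΨA|² ≥ 0` by parts gives `λ ∫ Ψ² ≤ ∫ |∇Ψ|²`.
For an equilateral triangle Lamé's ground state is `φ = ∏ j, sin ℓ j`, where `ℓ 0, ℓ 1, ℓ 2` are `π`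
times the barycentric coordinates, so `A = ∑ j, cot (ℓ j) ∇ℓ j`. The Riccati equation then reduces
to the identity `cot x cot y + cot y cot z + cot z cot x = 1` for `x + y + z = π`.
-/

section CompactSupport

variable {X : Type*} [TopologicalSpace X] [MeasurableSpace X] [OpensMeasurableSpace X]
  {μ : Measure X} [IsFiniteMeasureOnCompacts μ]

lemma integrable_of_continuousOn_tsupport {Y F : Type*} [Zero Y] [NormedAddCommGroup F]
    {Ψ : X → Y} {f : X → F} (hc : HasCompactSupport Ψ) (hf : ContinuousOn f (tsupport Ψ))
    (hf0 : ∀ x ∉ tsupport Ψ, f x = 0) : Integrable f μ :=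
  have hintegrable : IntegrableOn f (tsupport Ψ) μ :=
    hf.integrableOn_compact' hc (isClosed_tsupport Ψ).measurableSet
  hintegrable.integrable_of_forall_notMem_eq_zero hf0

lemma integrable_mul_sq {Ψ f : X → ℝ} (hΨ : Continuous Ψ) (hc : HasCompactSupport Ψ)
    (hf : ContinuousOn f (tsupport Ψ)) : Integrable (fun x ↦ f x * Ψ x ^ 2) μ :=
  integrable_of_continuousOn_tsupport hc (hf.mul (hΨ.pow 2).continuousOn)
    fun x hx ↦ by simp [image_eq_zero_of_notMem_tsupport hx]

end CompactSupport

section Barta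

variable {E : Type*} [NormedAddCommGroup E] [NormedSpace ℝ E] [MeasurableSpace E] [BorelSpace E]
  {μ : Measure E} {Ψ : E → ℝ}

lemma integrable_fderiv_apply_sq [IsFiniteMeasureOnCompacts μ] (hΨ : ContDiff ℝ 1 Ψ)
    (hc : HasCompactSupport Ψ) (v : E) : Integrable (fun x ↦ fderiv ℝ Ψ x v ^ 2) μ := by
  have hcont : Continuous (fderiv ℝ Ψ · v) :=
    (hΨ.continuous_fderiv one_ne_zero).clm_apply continuous_const
  exact integrable_of_continuousOn_tsupport hc (hcont.pow 2).continuousOn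
    fun x hx ↦ by simp [fderiv_of_notMem_tsupport ℝ hx]

lemma integrable_mul_two_mul_fderiv [IsFiniteMeasureOnCompacts μ] (hΨ : ContDiff ℝ 1 Ψ)
    (hc : HasCompactSupport Ψ) (v : E) {f : E → ℝ} (hf : ContinuousOn f (tsupport Ψ)) :
    Integrable (fun x ↦ f x * (2 * Ψ x * fderiv ℝ Ψ x v)) μ := by
  have hcont : Continuous (fun x ↦ 2 * Ψ x * fderiv ℝ Ψ x v) :=
    (continuous_const.mul hΨ.continuous).mul
      ((hΨ.continuous_fderiv one_ne_zero).clm_apply continuous_const)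
  exact integrable_of_continuousOn_tsupport hc (hf.mul hcont.continuousOn)
    fun x hx ↦ by simp [image_eq_zero_of_notMem_tsupport hx]

variable [FiniteDimensional ℝ E] [μ.IsAddHaarMeasure]

lemma integral_mul_two_mul_fderiv_eq_neg (hΨ : ContDiff ℝ 1 Ψ) (hc : HasCompactSupport Ψ)
    {v : E} {A A' : E → ℝ} (hA : ContinuousOn A (tsupport Ψ)) (hA' : ContinuousOn A' (tsupport Ψ))
    (hderiv : ∀ x ∈ tsupport Ψ, HasLineDerivAt ℝ A (A' x) x v) :
    ∫ x, A x * (2 * Ψ x * fderiv ℝ Ψ x v) ∂μ = -∫ x, A' x * Ψ x ^ 2 ∂μ := by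
  have hsq (x) : HasLineDerivAt ℝ (fun y ↦ Ψ y ^ 2) (2 * Ψ x * fderiv ℝ Ψ x v) x v := by
    simpa using ((hΨ.differentiable one_ne_zero x).hasFDerivAt.pow 2).hasLineDerivAt v
  have hsupp : tsupport (fun x ↦ Ψ x ^ 2) ⊆ tsupport Ψ :=
    closure_mono fun x hx h ↦ hx (by simp [h])
  exact integral_bilinear_hasLineDerivAt_right_eq_neg_left_of_integrable
    (B := ContinuousLinearMap.mul ℝ ℝ) (integrable_mul_sq hΨ.continuous hc hA')
    (integrable_mul_two_mul_fderiv hΨ hc v hA) (integrable_mul_sq hΨ.continuous hc hA)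
    (fun x hx ↦ hderiv x (hsupp hx)) fun x _ ↦ hsq x

lemma neg_integral_riccati_mul_sq_le (hΨ : ContDiff ℝ 1 Ψ) (hc : HasCompactSupport Ψ)
    {v : E} {A A' : E → ℝ} (hA : ContinuousOn A (tsupport Ψ)) (hA' : ContinuousOn A' (tsupport Ψ))
    (hderiv : ∀ x ∈ tsupport Ψ, HasLineDerivAt ℝ A (A' x) x v) :
    -∫ x, (A' x + A x ^ 2) * Ψ x ^ 2 ∂μ ≤ ∫ x, fderiv ℝ Ψ x v ^ 2 ∂μ := by
  have hcross : Integrable (fun x ↦ A x * (2 * Ψ x * fderiv ℝ Ψ x v)) μ :=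
    integrable_mul_two_mul_fderiv hΨ hc v hA
  have hderivsq : Integrable (fun x ↦ A' x * Ψ x ^ 2) μ := integrable_mul_sq hΨ.continuous hc hA'
  have hsqsq : Integrable (fun x ↦ A x ^ 2 * Ψ x ^ 2) μ :=
    integrable_mul_sq hΨ.continuous hc (hA.pow 2)
  calc -∫ x, (A' x + A x ^ 2) * Ψ x ^ 2 ∂μ
      = -∫ x, A' x * Ψ x ^ 2 ∂μ - ∫ x, A x ^ 2 * Ψ x ^ 2 ∂μ := by
        simp only [add_mul]
        rw [integral_add hderivsq hsqsq]
        ring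
    _ = ∫ x, (A x * (2 * Ψ x * fderiv ℝ Ψ x v) - A x ^ 2 * Ψ x ^ 2) ∂μ := by
        rw [integral_sub hcross hsqsq, integral_mul_two_mul_fderiv_eq_neg hΨ hc hA hA' hderiv]
    _ ≤ ∫ x, fderiv ℝ Ψ x v ^ 2 ∂μ :=
        integral_mono (hcross.sub hsqsq) (integrable_fderiv_apply_sq hΨ hc v) fun x ↦ by
          dsimp only
          linarith only [sq_nonneg (fderiv ℝ Ψ x v - Ψ x * A x)]

theorem mul_integral_sq_le_of_riccati {ι : Type*} [Fintype ι] (hΨ : ContDiff ℝ 1 Ψ)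
    (hc : HasCompactSupport Ψ) {v : ι → E} {A A' : ι → E → ℝ} {lam : ℝ}
    (hA : ∀ i, ContinuousOn (A i) (tsupport Ψ)) (hA' : ∀ i, ContinuousOn (A' i) (tsupport Ψ))
    (hderiv : ∀ i, ∀ x ∈ tsupport Ψ, HasLineDerivAt ℝ (A i) (A' i x) x (v i))
    (hriccati : ∀ x ∈ tsupport Ψ, ∑ i, (A' i x + A i x ^ 2) ≤ -lam) :
    lam * ∫ x, Ψ x ^ 2 ∂μ ≤ ∫ x, ∑ i, fderiv ℝ Ψ x (v i) ^ 2 ∂μ := by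
  have hintegrable (i) : Integrable (fun x ↦ (A' i x + A i x ^ 2) * Ψ x ^ 2) μ :=
    integrable_mul_sq hΨ.continuous hc ((hA' i).add ((hA i).pow 2))
  have hle (x) : ∑ i, (A' i x + A i x ^ 2) * Ψ x ^ 2 ≤ -lam * Ψ x ^ 2 := by
    rw [← Finset.sum_mul]
    by_cases hx : x ∈ tsupport Ψ
    · exact mul_le_mul_of_nonneg_right (hriccati x hx) (sq_nonneg _)
    · simp [image_eq_zero_of_notMem_tsupport hx]
  calc lam * ∫ x, Ψ x ^ 2 ∂μ
      = -∫ x, -lam * Ψ x ^ 2 ∂μ := by rw [integral_const_mul]; ring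
    _ ≤ -∫ x, ∑ i, (A' i x + A i x ^ 2) * Ψ x ^ 2 ∂μ :=
        neg_le_neg <| integral_mono (integrable_finsetSum _ fun i _ ↦ hintegrable i)
          (integrable_mul_sq hΨ.continuous hc continuousOn_const) hle
    _ = ∑ i, -∫ x, (A' i x + A i x ^ 2) * Ψ x ^ 2 ∂μ := by
        rw [integral_finsetSum _ fun i _ ↦ hintegrable i, Finset.sum_neg_distrib]
    _ ≤ ∑ i, ∫ x, fderiv ℝ Ψ x (v i) ^ 2 ∂μ :=
        Finset.sum_le_sum fun i _ ↦ neg_integral_riccati_mul_sq_le hΨ hc (hA i) (hA' i) (hderiv i)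
    _ = ∫ x, ∑ i, fderiv ℝ Ψ x (v i) ^ 2 ∂μ :=
        (integral_finsetSum _ fun i _ ↦ integrable_fderiv_apply_sq hΨ hc (v i)).symm

end Barta

section Cotangent

lemma cot_mul_cot_add_of_add_eq_pi {x y z : ℝ} (hx : sin x ≠ 0) (hy : sin y ≠ 0) (hz : sin z ≠ 0)
    (h : x + y + z = π) : cot x * cot y + cot y * cot z + cot z * cot x = 1 := by
  obtain rfl : z = π - (x + y) := by linarith
  rw [sin_pi_sub, sin_add] at hz
  simp only [cot_eq_cos_div_sin, cos_pi_sub, sin_pi_sub, sin_add, cos_add]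
  field_simp
  ring

lemma hasDerivAt_cot {x : ℝ} (hx : sin x ≠ 0) : HasDerivAt cot (-(1 + cot x ^ 2)) x := by
  have hcot : cot = fun y ↦ cos y / sin y := funext cot_eq_cos_div_sin
  rw [hcot]
  refine ((hasDerivAt_cos x).div (hasDerivAt_sin x) hx).congr_deriv ?_
  field_simp
  ring

end Cotangent

section Lame

variable {E κ : Type*} [NormedAddCommGroup E] [NormedSpace ℝ E]

/-- The derivative in the direction `v` of `log ∏ j, sin (g j x + c j)`, that is, a component of the
field to which Barta's method is applied. -/
noncomputable def logDerivProdSin [Fintype κ] (g : κ → E →L[ℝ] ℝ) (c : κ → ℝ) (v x : E) : ℝ :=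
  ∑ j, g j v * cot (g j x + c j)

lemma hasFDerivAt_cot_affine (g : E →L[ℝ] ℝ) (c : ℝ) {x : E} (hx : sin (g x + c) ≠ 0) :
    HasFDerivAt (fun y ↦ cot (g y + c)) (-(1 + cot (g x + c) ^ 2) • g) x :=
  HasDerivAt.comp_hasFDerivAt (h₂ := cot) x (hasDerivAt_cot hx) (g.hasFDerivAt.add_const c)

lemma hasLineDerivAt_logDerivProdSin [Fintype κ] {g : κ → E →L[ℝ] ℝ} {c : κ → ℝ} {v x : E}
    (hx : ∀ j, sin (g j x + c j) ≠ 0) :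
    HasLineDerivAt ℝ (logDerivProdSin g c v)
      (-∑ j, g j v ^ 2 * (1 + cot (g j x + c j) ^ 2)) x v := by
  have hsum : HasFDerivAt (logDerivProdSin g c v)
      (∑ j, g j v • -(1 + cot (g j x + c j) ^ 2) • g j) x :=
    HasFDerivAt.fun_sum fun j _ ↦ (hasFDerivAt_cot_affine (g j) (c j) (hx j)).const_mul (g j v)
  convert hsum.hasLineDerivAt v using 1
  rw [sum_apply, ← Finset.sum_neg_distrib]
  refine Finset.sum_congr rfl fun j _ ↦ ?_
  simp only [FunLike.coe_smul, Pi.smul_apply, smul_eq_mul]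
  ring

lemma sum_riccati_logDerivProdSin {ι : Type*} [Fintype ι] {g : Fin 3 → E →L[ℝ] ℝ} {c : Fin 3 → ℝ}
    {v : ι → E} {r : ℝ} (hg : ∑ j, g j = 0) (hc : ∑ j, c j = π)
    (hr : ∀ j, ∑ i, g j (v i) ^ 2 = r) {x : E} (hx : ∀ j, sin (g j x + c j) ≠ 0) :
    ∑ i, (-∑ j, g j (v i) ^ 2 * (1 + cot (g j x + c j) ^ 2) + logDerivProdSin g c (v i) x ^ 2) =
      -(4 * r) := by
  have hgsum (w : E) : g 0 w + g 1 w + g 2 w = 0 := by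
    simpa [Fin.sum_univ_three] using DFunLike.congr_fun hg w
  simp only [Fin.sum_univ_three] at hc
  have hcot := cot_mul_cot_add_of_add_eq_pi (hx 0) (hx 1) (hx 2) (by linarith [hgsum x])
  simp only [logDerivProdSin, Fin.sum_univ_three]
  generalize cot (g 0 x + c 0) = p, cot (g 1 x + c 1) = q, cot (g 2 x + c 2) = s at hcot ⊢
  -- Since `∑ j, g j = 0`, the mixed terms are `2 (g 0 w) (g 1 w) = (g 2 w)² - (g 0 w)² - (g 1 w)²`
  -- and cyclically, which makes the expression linear in the squares summed in `hr`.
  have hexpand (w : E) :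
      -(g 0 w ^ 2 * (1 + p ^ 2) + g 1 w ^ 2 * (1 + q ^ 2) + g 2 w ^ 2 * (1 + s ^ 2)) +
        (g 0 w * p + g 1 w * q + g 2 w * s) ^ 2 =
      g 0 w ^ 2 * (q * s - s * p - p * q - 1) + g 1 w ^ 2 * (s * p - p * q - q * s - 1) +
        g 2 w ^ 2 * (p * q - q * s - s * p - 1) := by
    rw [show g 2 w = -(g 0 w + g 1 w) by linarith [hgsum w]]
    ring
  simp only [hexpand, Finset.sum_add_distrib, ← Finset.sum_mul, hr]
  linear_combination -r * hcot

variable [FiniteDimensional ℝ E] [MeasurableSpace E] [BorelSpace E] {μ : Measure E}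
  [μ.IsAddHaarMeasure]

theorem mul_integral_sq_le_of_sum_affine_eq_pi {ι : Type*} [Fintype ι] {g : Fin 3 → E →L[ℝ] ℝ}
    {c : Fin 3 → ℝ} {v : ι → E} {r : ℝ} (hg : ∑ j, g j = 0) (hc : ∑ j, c j = π)
    (hr : ∀ j, ∑ i, g j (v i) ^ 2 = r) {Ψ : E → ℝ} (hΨ : ContDiff ℝ 1 Ψ)
    (hcs : HasCompactSupport Ψ) (hpos : ∀ x ∈ tsupport Ψ, ∀ j, 0 < g j x + c j) :
    4 * r * ∫ x, Ψ x ^ 2 ∂μ ≤ ∫ x, ∑ i, fderiv ℝ Ψ x (v i) ^ 2 ∂μ := by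
  have hsum (x : E) : ∑ j, (g j x + c j) = π := by
    rw [Finset.sum_add_distrib, ← sum_apply, hg, hc]
    simp
  have hsin : ∀ x ∈ tsupport Ψ, ∀ j, sin (g j x + c j) ≠ 0 := by
    intro x hx j
    refine (sin_pos_of_pos_of_lt_pi (hpos x hx j) ?_).ne'
    rw [← hsum x]
    obtain ⟨i, hij⟩ := exists_ne j
    exact Finset.single_lt_sum hij (Finset.mem_univ j) (Finset.mem_univ i) (hpos x hx i)
      fun k _ _ ↦ (hpos x hx k).le
  have hcot (j) : ContinuousOn (fun x ↦ cot (g j x + c j)) (tsupport Ψ) := fun x hx ↦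
    (hasFDerivAt_cot_affine (g j) (c j) (hsin x hx j)).continuousAt.continuousWithinAt
  refine mul_integral_sq_le_of_riccati hΨ hcs (A := fun i ↦ logDerivProdSin g c (v i))
    (fun i ↦ continuousOn_finsetSum _ fun j _ ↦ continuousOn_const.mul (hcot j))
    (fun i ↦ (continuousOn_finsetSum _ fun j _ ↦ continuousOn_const.mul
      (continuousOn_const.add ((hcot j).pow 2))).neg)
    (fun i x hx ↦ hasLineDerivAt_logDerivProdSin (hsin x hx))
    (fun x hx ↦ (sum_riccati_logDerivProdSin hg hc hr (hsin x hx)).le)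

end Lame

lemma pos_of_mem_interior_convexHull {E : Type*} [AddCommGroup E] [Module ℝ E]
    [TopologicalSpace E] [ContinuousAdd E] [ContinuousSMul ℝ E] {g : E →L[ℝ] ℝ} (hg : g ≠ 0)
    {c : ℝ} {S : Set E} (hS : ∀ x ∈ S, 0 ≤ g x + c) {x : E} (hx : x ∈ interior (convexHull ℝ S)) :
    0 < g x + c := by
  have hhull : convexHull ℝ S ⊆ g ⁻¹' Set.Ici (-c) :=
    convexHull_min (fun y hy ↦ by simpa [neg_le_iff_add_nonneg] using hS y hy)
      ((convex_Ici (-c)).linear_preimage g.toLinearMap)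
  have hmem := interior_mono hhull hx
  rw [← (g.isOpenMap_of_ne_zero hg).preimage_interior_eq_interior_preimage g.continuous,
    interior_Ici, Set.mem_preimage, Set.mem_Ioi] at hmem
  linarith

section EquilateralTriangle

/-- The linear parts of `π` times the barycentric coordinates of `eqTriangle a`; the constant parts
are `altitudeConst`. The factor `2 * π / (√3 * a)` is `π` divided by the altitude of the
triangle. -/
noncomputable def altitudeForm (a : ℝ) : Fin 3 → (ℝ × ℝ →L[ℝ] ℝ) :=
  (2 * π / (√3 * a)) • ![.snd ℝ ℝ ℝ, (√3 / 2) • .fst ℝ ℝ ℝ - (1 / 2 : ℝ) • .snd ℝ ℝ ℝ,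
    -(√3 / 2) • .fst ℝ ℝ ℝ - (1 / 2 : ℝ) • .snd ℝ ℝ ℝ]

/-- The constant parts of `π` times the barycentric coordinates of `eqTriangle a`. -/
noncomputable def altitudeConst : Fin 3 → ℝ := ![0, 0, π]

lemma altitudeForm_apply (a : ℝ) (j : Fin 3) (p : ℝ × ℝ) :
    altitudeForm a j p = 2 * π / (√3 * a) *
      ![p.2, √3 / 2 * p.1 - 1 / 2 * p.2, -(√3 / 2) * p.1 - 1 / 2 * p.2] j := by
  fin_cases j <;> simp [altitudeForm]

lemma sum_altitudeForm (a : ℝ) : ∑ j, altitudeForm a j = 0 := by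
  simp only [altitudeForm, Fin.sum_univ_three, Pi.smul_apply, Matrix.cons_val]
  module

lemma sum_altitudeConst : ∑ j, altitudeConst j = π := by
  simp [altitudeConst, Fin.sum_univ_three]

lemma sum_altitudeForm_sq (a : ℝ) (j : Fin 3) :
    ∑ i, altitudeForm a j ((![(1, 0), (0, 1)] : Fin 2 → ℝ × ℝ) i) ^ 2 =
      (2 * π / (√3 * a)) ^ 2 := by
  have hsqrt : √3 ^ 2 = 3 := sq_sqrt (by norm_num)
  simp only [altitudeForm_apply, mul_pow, ← Finset.mul_sum]
  refine mul_right_eq_self₀.mpr (.inl ?_)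
  fin_cases j <;> norm_num [Fin.sum_univ_two, div_pow, hsqrt]

lemma altitudeForm_ne_zero {a : ℝ} (ha : a ≠ 0) (j : Fin 3) : altitudeForm a j ≠ 0 := by
  intro h
  have hnorm : (2 * π / (√3 * a)) ^ 2 ≠ 0 := by positivity
  exact hnorm (by simpa [h] using (sum_altitudeForm_sq a j).symm)

lemma altitudeForm_add_altitudeConst_pos {a : ℝ} (ha : a ≠ 0) {p : ℝ × ℝ} (hp : p ∈ eqTriangle a)
    (j : Fin 3) : 0 < altitudeForm a j p + altitudeConst j := by
  refine pos_of_mem_interior_convexHull (altitudeForm_ne_zero ha j) ?_ hp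
  have haltitude : 2 * π / (√3 * a) * (√3 / 2 * a) = π := by field_simp
  simp only [altitudeForm_apply, altitudeConst]
  generalize 2 * π / (√3 * a) = k at haltitude
  rintro q (rfl | rfl | rfl) <;> fin_cases j <;>
    norm_num <;> linarith [pi_pos]

end EquilateralTriangle

theorem stmt_1_general (a : ℝ) (ha : a ≠ 0) :
    (∀ Ψ : ℝ × ℝ → ℝ, ContDiff ℝ 1 Ψ → HasCompactSupport Ψ → tsupport Ψ ⊆ eqTriangle a →
      (∫ p : ℝ × ℝ, ((fderiv ℝ Ψ p (1, 0)) ^ 2 + (fderiv ℝ Ψ p (0, 1)) ^ 2)) ≥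
        (16 * π ^ 2 / (3 * a ^ 2)) * ∫ p : ℝ × ℝ, (Ψ p) ^ 2) ∧
    (Real.sqrt 3 * a ^ 2 / 4 = π → 16 * π ^ 2 / (3 * a ^ 2) = 4 * π / Real.sqrt 3) := by
  have hsqrt : √3 ^ 2 = 3 := sq_sqrt (by norm_num)
  refine ⟨fun Ψ hΨ hc hsub ↦ ?_, fun harea ↦ ?_⟩
  · have hconst : 16 * π ^ 2 / (3 * a ^ 2) = 4 * (2 * π / (√3 * a)) ^ 2 := by
      rw [div_pow, mul_pow √3, hsqrt]
      ring
    have hpoincare := mul_integral_sq_le_of_sum_affine_eq_pi (μ := volume) (sum_altitudeForm a)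
      sum_altitudeConst (sum_altitudeForm_sq a) hΨ hc
      fun p hp ↦ altitudeForm_add_altitudeConst_pos ha (hsub hp)
    simpa [hconst, Fin.sum_univ_two] using hpoincare
  · rw [← harea]
    field_simp
    linear_combination 16 * hsqrt

theorem stmt_1 (a : ℝ) (ha : 0 < a) :
    (∀ Ψ : ℝ × ℝ → ℝ, ContDiff ℝ (⊤ : ℕ∞) Ψ → HasCompactSupport Ψ → tsupport Ψ ⊆ eqTriangle a →
      (∫ p : ℝ × ℝ, ((fderiv ℝ Ψ p (1, 0)) ^ 2 + (fderiv ℝ Ψ p (0, 1)) ^ 2)) ≥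
        (16 * π ^ 2 / (3 * a ^ 2)) * ∫ p : ℝ × ℝ, (Ψ p) ^ 2) ∧
    (Real.sqrt 3 * a ^ 2 / 4 = π → 16 * π ^ 2 / (3 * a ^ 2) = 4 * π / Real.sqrt 3) :=
  ⟨fun Ψ hΨ ↦ (stmt_1_general a ha.ne').1 Ψ (hΨ.of_le (by exact_mod_cast le_top)),
    (stmt_1_general a ha.ne').2⟩
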